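/- Let H : M → ℝ be a smooth compactly supported function on a compact-free setting as above and let c₊(H) = sup_{L∈𝓛} min_L H for a family 𝓛 invariant under isotopies. Assume the property: for any interval [E₁, E₂] of regular values, {H ≥ E₁} ⊇ some L ∈ 𝓛 implies {H ≥ E₂} ⊇ some L' ∈ 𝓛. Then c₊(H) is a critical value of H, i.e., there exists x with H(x) = c₊(H) and dH(x) = 0 (assuming the set of critical values of a compactly supported smooth function is closed). -/

import Mathlib

open scoped Manifold

/-!
If the max-min value `c` were a regular value, closedness of the critical values would put it in the
interior of an interval `[E₁, E₂]` of regular values. As `E₁ < c`, some member of the family lies in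
`{H ≥ E₁}`; pushing it up yields a member in `{H ≥ E₂}`, whose minimum is at least `E₂ > c`.
-/

section Maximin

open Set Topology

variable {X α : Type*} {f : X → α} {𝓛 : Set (Set X)} {L : Set X} {a : α}

/-- The max-min value of `f` over the family `𝓛`, written `c₊(f)` when `𝓛` is the family of
non-contractible embedded circles. Minima and maximum are encoded as infima and a supremum, which
take a default value on empty or unbounded sets. -/
noncomputable def maximin [ConditionallyCompleteLattice α] (f : X → α) (𝓛 : Set (Set X)) : α :=
  ⨆ L : 𝓛, sInf (f '' (L : Set X))

theorem bddAbove_range_sInf_image [ConditionallyCompleteLattice α] (hf : BddAbove (range f))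
    (hne : ∀ L ∈ 𝓛, L.Nonempty) (hbelow : ∀ L ∈ 𝓛, BddBelow (f '' L)) :
    BddAbove (range fun L : 𝓛 => sInf (f '' (L : Set X))) := by
  obtain ⟨b, hb⟩ := hf
  refine ⟨b, forall_mem_range.2 fun L => ?_⟩
  obtain ⟨x, hx⟩ := hne L L.2
  exact (csInf_le (hbelow L L.2) (mem_image_of_mem f hx)).trans (hb (mem_range_self x))

theorem le_maximin [ConditionallyCompleteLattice α]
    (habove : BddAbove (range fun L : 𝓛 => sInf (f '' (L : Set X))))
    (hL : L ∈ 𝓛) (hLne : L.Nonempty) (ha : L ⊆ {x | a ≤ f x}) : a ≤ maximin f 𝓛 :=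
  calc
    a ≤ sInf (f '' L) := le_csInf (hLne.image f) (forall_mem_image.2 ha)
    _ ≤ maximin f 𝓛 := le_ciSup habove ⟨L, hL⟩

variable [ConditionallyCompleteLinearOrder α]

theorem exists_subset_superlevel_of_lt_maximin (h𝓛 : 𝓛.Nonempty)
    (hbelow : ∀ L ∈ 𝓛, BddBelow (f '' L)) (ha : a < maximin f 𝓛) :
    ∃ L ∈ 𝓛, L ⊆ {x | a ≤ f x} := by
  have := h𝓛.to_subtype
  obtain ⟨L, hL⟩ := exists_lt_of_lt_ciSup ha
  exact ⟨L, L.2, fun x hx => hL.le.trans (csInf_le (hbelow L L.2) (mem_image_of_mem f hx))⟩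

theorem maximin_mem_of_isClosed [TopologicalSpace α] [OrderTopology α] [DenselyOrdered α]
    [NoMinOrder α] [NoMaxOrder α] {S : Set α} (hS : IsClosed S) (h𝓛 : 𝓛.Nonempty)
    (hne : ∀ L ∈ 𝓛, L.Nonempty) (hbelow : ∀ L ∈ 𝓛, BddBelow (f '' L))
    (habove : BddAbove (range fun L : 𝓛 => sInf (f '' (L : Set X))))
    (hpush : ∀ a b, a < b → Icc a b ⊆ Sᶜ →
      (∃ L ∈ 𝓛, L ⊆ {x | a ≤ f x}) → ∃ L ∈ 𝓛, L ⊆ {x | b ≤ f x}) :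
    maximin f 𝓛 ∈ S := by
  by_contra hc
  obtain ⟨a, b, -, hnhds, hsub⟩ := exists_Icc_mem_subset_of_mem_nhds (hS.compl_mem_nhds hc)
  obtain ⟨hac, hcb⟩ : a < maximin f 𝓛 ∧ maximin f 𝓛 < b := Icc_mem_nhds_iff.1 hnhds
  obtain ⟨L, hL, hLb⟩ := hpush a b (hac.trans hcb) hsub
    (exists_subset_superlevel_of_lt_maximin h𝓛 hbelow hac)
  exact hcb.not_ge (le_maximin habove hL (hne L hL) hLb)

end Maximin

theorem cplus_is_critical_value_general
    {E : Type*} [NormedAddCommGroup E] [NormedSpace ℝ E]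
    {B : Type*} [TopologicalSpace B] (I : ModelWithCorners ℝ E B)
    {M : Type*} [TopologicalSpace M] [ChartedSpace B M]
    (H : M → ℝ) (hH : MDifferentiable I 𝓘(ℝ, ℝ) H) (hbdd : BddAbove (Set.range H))
    (𝓛 : Set (Set M)) (h𝓛ne : 𝓛.Nonempty)
    (hcompact : ∀ L ∈ 𝓛, IsCompact L) (hne : ∀ L ∈ 𝓛, L.Nonempty)
    (hpush : ∀ E₁ E₂ : ℝ, E₁ < E₂ →
      (∀ x, H x ∈ Set.Icc E₁ E₂ → mfderiv I 𝓘(ℝ, ℝ) H x ≠ 0) →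
      (∃ L ∈ 𝓛, L ⊆ {x | E₁ ≤ H x}) → ∃ L' ∈ 𝓛, L' ⊆ {x | E₂ ≤ H x})
    (hclosed : IsClosed {v : ℝ | ∃ x, H x = v ∧ mfderiv I 𝓘(ℝ, ℝ) H x = 0}) :
    ∃ x, H x = maximin H 𝓛 ∧ mfderiv I 𝓘(ℝ, ℝ) H x = 0 := by
  have hbelow : ∀ L ∈ 𝓛, BddBelow (H '' L) := fun L hL =>
    (hcompact L hL).bddBelow_image hH.continuous.continuousOn
  refine maximin_mem_of_isClosed hclosed h𝓛ne hne hbelow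
    (bddAbove_range_sInf_image hbdd hne hbelow) fun E₁ E₂ hlt hregular => ?_
  exact hpush E₁ E₂ hlt fun x hx hcrit => hregular hx ⟨x, rfl, hcrit⟩

theorem cplus_is_critical_value
    {E : Type*} [NormedAddCommGroup E] [NormedSpace ℝ E] [FiniteDimensional ℝ E]
    {M : Type*} [TopologicalSpace M] [ChartedSpace E M] [T2Space M]
    (H : M → ℝ) (hH : ContMDiff (𝓘(ℝ, E)) (𝓘(ℝ, ℝ)) (⊤ : ℕ∞) H)
    (hHsupp : HasCompactSupport H)
    (𝓛 : Set (Set M)) (h𝓛ne : 𝓛.Nonempty)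
    (hcompact : ∀ L ∈ 𝓛, IsCompact L) (hne : ∀ L ∈ 𝓛, L.Nonempty)
    (hpush : ∀ E₁ E₂ : ℝ, E₁ < E₂ →
      (∀ x, H x ∈ Set.Icc E₁ E₂ → mfderiv (𝓘(ℝ, E)) (𝓘(ℝ, ℝ)) H x ≠ 0) →
      (∃ L ∈ 𝓛, L ⊆ {x | E₁ ≤ H x}) → ∃ L' ∈ 𝓛, L' ⊆ {x | E₂ ≤ H x})
    (hclosed : IsClosed {v : ℝ | ∃ x, H x = v ∧ mfderiv (𝓘(ℝ, E)) (𝓘(ℝ, ℝ)) H x = 0}) :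
    ∃ x, H x = (⨆ L : 𝓛, sInf (H '' (L : Set M))) ∧
      mfderiv (𝓘(ℝ, E)) (𝓘(ℝ, ℝ)) H x = 0 :=
  cplus_is_critical_value_general 𝓘(ℝ, E) H (hH.mdifferentiable (by simp))
    (hHsupp.isCompact_range hH.continuous).bddAbove 𝓛 h𝓛ne hcompact hne hpush hclosed
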